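/- Let R and S be rings and let F : Mod R ⥤ C(Mod S) be an additive functor that is exact, i.e., for every short exact sequence 0 → X → Y → Z → 0 of R-modules and every j ∈ ℤ, the induced sequence 0 → F(X)^j → F(Y)^j → F(Z)^j → 0 of S-modules is exact. Let M^• be an acyclic cochain complex of R-modules (H^n(M^•) = 0 for all n) such that the associated double complex F^DC(M) is diagonally bounded-below, i.e., for every n ∈ ℤ there exists t ∈ ℤ with F(M^i)^{n−i} = 0 for all i < t. Then the total complex F^C(M^•) is acyclic. -/

import Mathlib

open CategoryTheory CategoryTheory.Limits

/-!
The rows of the double complex are exact, because an exact functor preserves exactness of `M`.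
Filter each `Tot^n` by the submodules `colFil m` generated by the columns of index `< m`. Every
element of a direct sum lies in some `colFil m`, and `colFil t = 0` for `t` small by diagonal
boundedness. So it suffices to move a cocycle `x ∈ colFil (m + 1)` into `colFil m` by subtracting a
coboundary. Write `x = x' + y` with `x' ∈ colFil m` and `y` in column `m`. The component of `d x`
in column `m + 1` is the horizontal differential of `y`, so it vanishes; by exactness of the rows
`y` is the horizontal differential of some `z` in column `m - 1`, and `x - d z` lies in
`colFil m`.
-/

universe v

namespace ExtC

variable {S : Type} [Ring S]
  (K : HomologicalComplex₂ (ModuleCat.{v} S) (ComplexShape.up ℤ) (ComplexShape.up ℤ))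

/-- The inclusion of the summand `K^{i,j}` in the total complex, in degree `n = i + j`. -/
noncomputable abbrev inc (i j n : ℤ) (h : i + j = n) :
    (K.X i).X j ⟶ (K.total (ComplexShape.up ℤ)).X n :=
  K.ιTotal (ComplexShape.up ℤ) i j n h

/-- The projection of the total complex in degree `n` onto `K^{a,b}`; it is zero unless
`a + b = n`. -/
noncomputable def proj (a b n : ℤ) :
    (K.total (ComplexShape.up ℤ)).X n ⟶ (K.X a).X b :=
  K.totalDesc fun i j _ =>
    if h : i = a ∧ j = b then (K.XXIsoOfEq _ _ _ h.1 h.2).hom else 0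

lemma proj_inc_self (i j n : ℤ) (h : i + j = n) (y : (K.X i).X j) :
    proj K i j n (inc K i j n h y) = y := by
  have : inc K i j n h ≫ proj K i j n = 𝟙 _ := by
    simp [inc, proj]
  rw [← ConcreteCategory.comp_apply, this]; rfl

lemma proj_inc_of_ne (i j n a b : ℤ) (h : i + j = n) (hi : i ≠ a) (y : (K.X i).X j) :
    proj K a b n (inc K i j n h y) = 0 := by
  have : inc K i j n h ≫ proj K a b n = 0 := by
    simp [inc, proj, hi]
  rw [← ConcreteCategory.comp_apply, this]; rfl

/-- The total differential on a summand, with the horizontal component carrying no sign. -/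
lemma d_inc (i j n : ℤ) (h : i + j = n) (y : (K.X i).X j) :
    (K.total (ComplexShape.up ℤ)).d n (n + 1) (inc K i j n h y) =
      inc K (i + 1) j (n + 1) (by lia) ((K.d i (i + 1)).f j y) +
      inc K i (j + 1) (n + 1) (by lia)
        (((i.negOnePow : ℤˣ) : ℤ) • (K.X i).d j (j + 1) y) := by
  have : inc K i j n h ≫ (K.total (ComplexShape.up ℤ)).d n (n + 1) =
      (K.d i (i + 1)).f j ≫ inc K (i + 1) j (n + 1) (by lia) +
      (((i.negOnePow : ℤˣ) : ℤ) • (K.X i).d j (j + 1)) ≫ inc K i (j + 1) (n + 1) (by lia) := by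
    have h1 : ComplexShape.π (ComplexShape.up ℤ) (ComplexShape.up ℤ) (ComplexShape.up ℤ)
      (i + 1, j) = n + 1 := by change i + 1 + j = n + 1; lia
    have h2 : ComplexShape.π (ComplexShape.up ℤ) (ComplexShape.up ℤ) (ComplexShape.up ℤ)
      (i, j + 1) = n + 1 := by change i + (j + 1) = n + 1; lia
    rw [HomologicalComplex₂.total_d, Preadditive.comp_add, HomologicalComplex₂.ι_D₁,
      HomologicalComplex₂.ι_D₂, K.d₁_eq _ (i₁' := i + 1) (by simp) _ _ h1,
      K.d₂_eq _ _ (i₂' := j + 1) (by simp) _ h2, Preadditive.zsmul_comp]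
    congr 1
    exact one_smul _ _
  rw [← ConcreteCategory.comp_apply, this]; rfl

/-- The submodule of `Tot^n` generated by the columns of index `< m`. -/
noncomputable def colFil (n m : ℤ) : Submodule S ((K.total (ComplexShape.up ℤ)).X n) :=
  Submodule.span S {x | ∃ (i j : ℤ) (h : i + j = n) (y : (K.X i).X j), i < m ∧
    x = inc K i j n h y}

lemma inc_mem_colFil {i j n m : ℤ} (h : i + j = n) (hi : i < m) (y : (K.X i).X j) :
    inc K i j n h y ∈ colFil K n m :=
  Submodule.subset_span ⟨i, j, h, y, hi, rfl⟩

lemma colFil_mono (n : ℤ) : Monotone (colFil K n) := by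
  intro m m' hm
  refine Submodule.span_mono ?_
  rintro x ⟨i, j, h, y, hi, rfl⟩
  exact ⟨i, j, h, y, by lia, rfl⟩

lemma exists_mem_colFil (n : ℤ) (x : (K.total (ComplexShape.up ℤ)).X n) :
    ∃ m, x ∈ colFil K n m := by
  rw [← Submodule.mem_iSup_of_directed _ (colFil_mono K n).directed_le]
  -- The quotient map by the union of the filtration vanishes on every summand.
  have : ModuleCat.ofHom (⨆ m, colFil K n m).mkQ = 0 := by
    apply HomologicalComplex₂.total.hom_ext
    intro i j h
    ext y
    change (⨆ m, colFil K n m).mkQ (inc K i j n h y) = 0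
    rw [Submodule.mkQ_apply, Submodule.Quotient.mk_eq_zero]
    exact Submodule.mem_iSup_of_mem (i + 1) (inc_mem_colFil K h (by lia) y)
  rw [← Submodule.Quotient.mk_eq_zero]
  exact LinearMap.congr_fun (congrArg ModuleCat.Hom.hom this) x

lemma colFil_eq_bot (n t : ℤ) (ht : ∀ i : ℤ, i < t → IsZero ((K.X i).X (n - i))) :
    colFil K n t = ⊥ := by
  rw [colFil, Submodule.span_eq_bot]
  rintro x ⟨i, j, h, y, hi, rfl⟩
  obtain rfl : j = n - i := by lia
  rw [(ht i hi).eq_of_src (inc K i (n - i) n h) 0]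
  rfl

lemma proj_eq_zero_of_mem_colFil {n m a b : ℤ} (ha : m ≤ a)
    {x : (K.total (ComplexShape.up ℤ)).X n} (hx : x ∈ colFil K n m) :
    proj K a b n x = 0 := by
  induction hx using Submodule.span_induction with
  | mem x hx =>
    obtain ⟨i, j, h, y, hi, rfl⟩ := hx
    exact proj_inc_of_ne K i j n a b h (by lia) y
  | zero => simp
  | add x y _ _ hx hy => rw [map_add, hx, hy, add_zero]
  | smul r x _ hx => rw [map_smul, hx, smul_zero]

lemma d_mem_colFil {n m : ℤ}
    {x : (K.total (ComplexShape.up ℤ)).X n} (hx : x ∈ colFil K n m) :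
    (K.total (ComplexShape.up ℤ)).d n (n + 1) x ∈ colFil K (n + 1) (m + 1) := by
  induction hx using Submodule.span_induction with
  | mem x hx =>
    obtain ⟨i, j, h, y, hi, rfl⟩ := hx
    rw [d_inc]
    exact add_mem (inc_mem_colFil K _ (by lia) _) (inc_mem_colFil K _ (by lia) _)
  | zero => simp
  | add x y _ _ hx hy => rw [map_add]; exact add_mem hx hy
  | smul r x _ hx => rw [map_smul]; exact Submodule.smul_mem _ _ hx

lemma exists_decomp {n m : ℤ}
    {x : (K.total (ComplexShape.up ℤ)).X n} (hx : x ∈ colFil K n (m + 1)) :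
    ∃ x' ∈ colFil K n m, ∃ y : (K.X m).X (n - m), x = x' + inc K m (n - m) n (by lia) y := by
  induction hx using Submodule.span_induction with
  | mem x hx =>
    obtain ⟨i, j, h, y, hi, rfl⟩ := hx
    by_cases him : i = m
    · subst him
      obtain rfl : j = n - i := by lia
      exact ⟨0, zero_mem _, y, by simp⟩
    · exact ⟨_, inc_mem_colFil K h (by lia) y, 0, by simp⟩
  | zero => exact ⟨0, zero_mem _, 0, by simp⟩
  | add x y _ _ hx hy =>
    obtain ⟨x', hx', u, rfl⟩ := hx
    obtain ⟨y', hy', w, rfl⟩ := hy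
    exact ⟨x' + y', add_mem hx' hy', u + w, by rw [map_add]; abel⟩
  | smul r x _ hx =>
    obtain ⟨x', hx', u, rfl⟩ := hx
    exact ⟨r • x', Submodule.smul_mem _ _ hx', r • u, by rw [map_smul, smul_add]⟩

/-- One step of the descent: a cocycle in `colFil (m + 1)` is cohomologous to one in `colFil m`. -/
lemma exists_sub_d_mem
    (hrow : ∀ i j : ℤ, ∀ y : (K.X (i + 1)).X j, (K.d (i + 1) (i + 1 + 1)).f j y = 0 →
      ∃ z : (K.X i).X j, (K.d i (i + 1)).f j z = y)
    {n m : ℤ} {x : (K.total (ComplexShape.up ℤ)).X (n + 1)}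
    (hx : x ∈ colFil K (n + 1) (m + 1 + 1))
    (hdx : (K.total (ComplexShape.up ℤ)).d (n + 1) (n + 1 + 1) x = 0) :
    ∃ w, x - (K.total (ComplexShape.up ℤ)).d n (n + 1) w ∈ colFil K (n + 1) (m + 1) := by
  obtain ⟨x', hx', y, rfl⟩ := exists_decomp K hx
  have hy : (K.d (m + 1) (m + 1 + 1)).f (n + 1 - (m + 1)) y = 0 := by
    have := congrArg (proj K (m + 1 + 1) (n + 1 - (m + 1)) (n + 1 + 1)) hdx
    rwa [map_add, d_inc, map_add, map_add, proj_inc_self,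
      proj_eq_zero_of_mem_colFil K le_rfl (d_mem_colFil K hx'),
      proj_inc_of_ne _ _ _ _ _ _ _ (by lia), zero_add, add_zero, map_zero] at this
  obtain ⟨z, rfl⟩ := hrow _ _ y hy
  refine ⟨inc K m (n + 1 - (m + 1)) n (by lia) z, ?_⟩
  rw [d_inc, sub_add_eq_sub_sub]
  refine sub_mem ?_ (inc_mem_colFil K _ (by lia) _)
  rwa [add_sub_cancel_right]

/-- A diagonally bounded-below double complex with exact rows has an acyclic total complex. -/
lemma total_exactAt
    (hrow : ∀ i j : ℤ, ∀ y : (K.X (i + 1)).X j, (K.d (i + 1) (i + 1 + 1)).f j y = 0 →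
      ∃ z : (K.X i).X j, (K.d i (i + 1)).f j z = y)
    (hbdd : ∀ n : ℤ, ∃ t : ℤ, ∀ i : ℤ, i < t → IsZero ((K.X i).X (n - i))) (n : ℤ) :
    (K.total (ComplexShape.up ℤ)).ExactAt n := by
  obtain ⟨n, rfl⟩ : ∃ k, n = k + 1 := ⟨n - 1, by lia⟩
  rw [HomologicalComplex.exactAt_iff' _ n (n + 1) (n + 1 + 1) (by simp) (by simp),
    ShortComplex.moduleCat_exact_iff]
  intro (x : (K.total (ComplexShape.up ℤ)).X (n + 1)) hdx
  change (K.total (ComplexShape.up ℤ)).d (n + 1) (n + 1 + 1) x = 0 at hdx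
  change ∃ w, (K.total (ComplexShape.up ℤ)).d n (n + 1) w = x
  obtain ⟨t, ht⟩ := hbdd (n + 1)
  obtain ⟨m, hm⟩ := exists_mem_colFil K (n + 1) x
  obtain ⟨k, hk⟩ : ∃ k : ℕ, m ≤ t + k := ⟨(m - t).toNat, by lia⟩
  replace hm := colFil_mono K _ hk hm
  clear hk
  induction k generalizing x with
  | zero =>
    rw [Nat.cast_zero, add_zero, colFil_eq_bot K _ _ ht, Submodule.mem_bot] at hm
    exact ⟨0, by rw [hm, map_zero]⟩
  | succ k ih =>
    obtain ⟨w, hw⟩ := exists_sub_d_mem K hrow (m := t + k - 1) (n := n) (x := x)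
      (by convert hm using 2; push_cast; ring) hdx
    rw [sub_add_cancel] at hw
    obtain ⟨w', hw'⟩ := ih _ (by
      rw [map_sub, hdx, zero_sub, neg_eq_zero, ← ConcreteCategory.comp_apply,
        HomologicalComplex.d_comp_d]; rfl) hw
    exact ⟨w' + w, by rw [map_add, hw', sub_add_cancel]⟩

end ExtC

/-- **Theorem 4.10(1).** Let `R` and `S` be rings and `F : Mod R ⥤ C(Mod S)` an additive
functor which is exact in the sense that it sends every short exact sequence of `R`-modules
to a degreewise short exact sequence.  If `M` is an acyclic cochain complex of `R`-modules
such that the double complex `F^{DC}(M)` (with `i`-th column `F(M^i)` and horizontal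
differentials `F(d_M^i)`) is diagonally bounded-below, then the total complex
`F^C(M) = Tot(F^{DC}(M))` is acyclic. -/
theorem extC_acyclic_of_acyclic
    (R S : Type) [Ring R] [Ring S]
    (F : ModuleCat R ⥤ CochainComplex (ModuleCat S) ℤ) [F.Additive]
    (hexact : ∀ sc : ShortComplex (ModuleCat R), sc.ShortExact →
      ∀ j : ℤ,
        (sc.map (F ⋙ HomologicalComplex.eval (ModuleCat S) (ComplexShape.up ℤ) j)).ShortExact)
    (M : CochainComplex (ModuleCat R) ℤ)
    (hM : ∀ n : ℤ, M.ExactAt n)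
    (hbdd : ∀ n : ℤ, ∃ t : ℤ, ∀ i : ℤ, i < t → IsZero ((F.obj (M.X i)).X (n - i))) :
    ∀ n : ℤ,
      (HomologicalComplex₂.total ((F.mapHomologicalComplex (ComplexShape.up ℤ)).obj M)
        (ComplexShape.up ℤ)).ExactAt n := by
  refine ExtC.total_exactAt _ ?_ hbdd
  intro i j y hy
  let G := F ⋙ HomologicalComplex.eval (ModuleCat S) (ComplexShape.up ℤ) j
  have hiff : (∀ sc : ShortComplex (ModuleCat R), sc.ShortExact → (sc.map G).ShortExact) ↔
      ∀ sc : ShortComplex (ModuleCat R), sc.Exact → (sc.map G).Exact :=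
    (Functor.exact_tfae G).out 0 1
  have hG := hiff.1 (fun sc hsc => hexact sc hsc j) (M.sc' i (i + 1) (i + 1 + 1))
    ((M.exactAt_iff' i (i + 1) (i + 1 + 1) (by simp) (by simp)).1 (hM (i + 1)))
  exact (ShortComplex.moduleCat_exact_iff _).1 hG y hy
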